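/- Let d ≥ 2 be an integer and let x₁,…,x_d be pairwise distinct positive real numbers, with elementary symmetric polynomials e₁,…,e_d and q(τ) = ∏_{i=1}^d (τ + x_i). Then the subentropy satisfies Q(x₁,…,x_d) = e₁ + e₁·( ∫₀^∞ [ τ^{d−1}/q(τ) − 1/(τ+1) ] dτ − 1 ) + Σ_{k=2}^d e_k·∫₀^∞ τ^{d−k}/q(τ) dτ. (This is the identity Q = e₁ + Σ_{k=1}^d e_k ∂H/∂e_k, where ∂H/∂e₁ = ∫₀^∞[τ^{d−1}/q − 1/(τ+1)]dτ − 1 and ∂H/∂e_k = ∫₀^∞ τ^{d−k}/q dτ for k ≥ 2.) -/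

import Mathlib

open MeasureTheory Real

/-!
For `P` of degree `< d`, Lagrange interpolation at the nodes `-xᵢ`, with nodal weights `wᵢ`, gives
the partial fractions `P / q = ∑ wᵢ P(-xᵢ) / (τ + xᵢ)`. Subtracting `(∑ wᵢ P(-xᵢ)) / (τ + 1)`
makes every term integrable on the half-axis, and `∫₀^∞ (1 / (τ + a) - 1 / (τ + 1)) dτ = -log a`
turns the integral into `-∑ wᵢ P(-xᵢ) log xᵢ`. For `P = q - τ ^ d` one has `P(-xᵢ) = -(-xᵢ) ^ d`,
so this sum is the subentropy; expanding `q - τ ^ d = ∑ eₖ τ ^ (d - k)` under the integral yields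
the identity.
-/

open Finset Polynomial Lagrange

section PartialFractions

variable {ι F : Type*} [DecidableEq ι] [Field F] {s : Finset ι} {v : ι → F} {P : F[X]}

theorem sum_eval_mul_nodalWeight (hv : Set.InjOn v s) (hP : P.degree < #s) :
    ∑ i ∈ s, P.eval (v i) * nodalWeight s v i = P.coeff (#s - 1) := by
  simp only [coeff_eq_sum hv hP, nodalWeight, prod_inv_distrib, div_eq_mul_inv]

theorem eval_div_prod_sub_eq_sum (hv : Set.InjOn v s) (hP : P.degree < #s) {t : F}
    (ht : ∀ i ∈ s, t ≠ v i) :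
    P.eval t / ∏ i ∈ s, (t - v i) =
      ∑ i ∈ s, P.eval (v i) * nodalWeight s v i * (1 / (t - v i)) := by
  rw [div_eq_iff (prod_ne_zero_iff.mpr fun i hi ↦ sub_ne_zero.mpr (ht i hi)), ← eval_nodal,
    mul_comm]
  conv_lhs => rw [eq_interpolate hv hP, eval_interpolate_not_at_node _ ht]
  exact congrArg _ (sum_congr rfl fun i _ ↦ by ring)

theorem eval_div_prod_sub_sub_coeff_mul (hv : Set.InjOn v s) (hP : P.degree < #s) {t : F}
    (ht : ∀ i ∈ s, t ≠ v i) (c : F) :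
    P.eval t / ∏ i ∈ s, (t - v i) - P.coeff (#s - 1) * c =
      ∑ i ∈ s, P.eval (v i) * nodalWeight s v i * (1 / (t - v i) - c) := by
  simp only [eval_div_prod_sub_eq_sum hv hP ht, ← sum_eval_mul_nodalWeight hv hP, sum_mul,
    ← sum_sub_distrib, mul_sub]

theorem neg_pow_card_mul_nodalWeight_neg {i : ι} (hi : i ∈ s) :
    (-v i) ^ #s * nodalWeight s (-v) i = -(v i ^ #s / ∏ j ∈ s.erase i, (v i - v j)) := by
  have weight_neg : nodalWeight s (-v) i =
      (-1) ^ #(s.erase i) * (∏ j ∈ s.erase i, (v i - v j))⁻¹ := by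
    simp only [nodalWeight, Pi.neg_apply, ← neg_sub', inv_neg, prod_neg, prod_inv_distrib]
  have sign : (-1 : F) ^ #s * (-1) ^ #(s.erase i) = -1 := by
    rw [← pow_add, ← card_erase_add_one hi]
    exact Odd.neg_one_pow ⟨#(s.erase i), by ring⟩
  rw [weight_neg, neg_pow]
  linear_combination (v i ^ #s * (∏ j ∈ s.erase i, (v i - v j))⁻¹) * sign

end PartialFractions

section Vieta

variable {ι R : Type*} [CommRing R] (s : Finset ι) (x : ι → R)

theorem prod_add_sub_pow_card_eq_sum_esymm (t : R) :
    ∏ i ∈ s, (t + x i) - t ^ #s = ∑ k ∈ Icc 1 #s, (s.val.map x).esymm k * t ^ (#s - k) := by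
  have vieta := congrArg (eval t) (Multiset.prod_X_add_C_eq_sum_esymm (s.val.map x))
  simp only [Multiset.map_map, Multiset.card_map, card_val, Function.comp_apply, prod_map_val,
    eval_prod, eval_finsetSum, eval_add, eval_mul, eval_pow, eval_X, eval_C] at vieta
  rw [vieta, range_eq_Ico, sum_eq_sum_Ico_succ_bot (Nat.succ_pos _)]
  simp [esymm_map_val, Ico_add_one_right_eq_Icc]

theorem degree_prod_X_add_C_sub_X_pow_card_lt [Nontrivial R] :
    degree (∏ i ∈ s, (X + C (x i)) - X ^ #s) < #s := by
  have monic : (∏ i ∈ s, (X + C (x i))).Monic :=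
    monic_prod_of_monic _ _ fun i _ ↦ monic_X_add_C (x i)
  have degree_eq : degree (∏ i ∈ s, (X + C (x i))) = #s := by
    simp [degree_prod_of_monic _ _ fun i _ ↦ monic_X_add_C (x i)]
  rw [← degree_eq]
  exact degree_sub_lt_left (by rw [degree_eq, degree_X_pow]) monic.ne_zero
    (by rw [monic.leadingCoeff, leadingCoeff_X_pow])

theorem coeff_prod_X_add_C_sub_X_pow_card :
    (∏ i ∈ s, (X + C (x i)) - X ^ #s).coeff (#s - 1) = (s.val.map x).esymm 1 := by
  rw [esymm_map_val]
  rcases s.eq_empty_or_nonempty with rfl | hs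
  · simp [powersetCard_one]
  have one_le_card : 1 ≤ #s := hs.card_pos
  rw [coeff_sub, prod_X_add_C_coeff s x (Nat.sub_le _ _), coeff_X_pow, if_neg (by lia), sub_zero,
    Nat.sub_sub_self one_le_card]

end Vieta

theorem one_sub_pow_card_div_prod_add_sub {ι F : Type*} [Field F] {s : Finset ι} {x : ι → F}
    (hs : s.Nonempty) {t : F} (ht : ∏ i ∈ s, (t + x i) ≠ 0) (c : F) :
    1 - t ^ #s / ∏ i ∈ s, (t + x i) - (s.val.map x).esymm 1 * c =
      (s.val.map x).esymm 1 * (t ^ (#s - 1) / ∏ i ∈ s, (t + x i) - c) +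
        ∑ k ∈ Icc 2 #s, (s.val.map x).esymm k * (t ^ (#s - k) / ∏ i ∈ s, (t + x i)) := by
  rw [one_sub_div ht, prod_add_sub_pow_card_eq_sum_esymm,
    ← add_sum_Ioc_eq_sum_Icc (Nat.one_le_of_lt hs.card_pos), ← Icc_add_one_left_eq_Ioc,
    one_add_one_eq_two, add_div, sum_div]
  simp only [mul_div_assoc]
  ring

section HalfAxis

theorem hasDerivAt_log_add_sub_log_add {a b τ : ℝ} (ha : 0 < τ + a) (hb : 0 < τ + b) :
    HasDerivAt (fun τ ↦ log (τ + a) - log (τ + b)) (1 / (τ + a) - 1 / (τ + b)) τ :=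
  (((hasDerivAt_id τ).add_const a).log ha.ne').sub (((hasDerivAt_id τ).add_const b).log hb.ne')

theorem tendsto_log_add_sub_log_add (a b : ℝ) :
    Filter.Tendsto (fun τ ↦ log (τ + a) - log (τ + b)) Filter.atTop (nhds 0) := by
  simpa using (tendsto_log_comp_add_sub_log a).sub (tendsto_log_comp_add_sub_log b)

variable {a b : ℝ}

theorem integrableOn_one_div_add_sub_one_div_add (ha : 0 < a) (hb : 0 < b) :
    IntegrableOn (fun τ ↦ 1 / (τ + a) - 1 / (τ + b)) (Set.Ioi 0) := by
  wlog hab : a ≤ b generalizing a b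
  · exact (this hb ha (le_of_not_ge hab)).neg.congr_fun (fun τ _ ↦ neg_sub _ _) measurableSet_Ioi
  refine integrableOn_Ioi_deriv_of_nonneg' (fun τ hτ ↦ ?_) (fun τ hτ ↦ ?_)
    (tendsto_log_add_sub_log_add a b)
  · exact hasDerivAt_log_add_sub_log_add (add_pos_of_nonneg_of_pos hτ ha)
      (add_pos_of_nonneg_of_pos hτ hb)
  · exact sub_nonneg.mpr (one_div_le_one_div_of_le (add_pos hτ ha) (by gcongr))

theorem integral_one_div_add_sub_one_div_add (ha : 0 < a) (hb : 0 < b) :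
    ∫ τ in Set.Ioi 0, (1 / (τ + a) - 1 / (τ + b)) = log b - log a := by
  have hasDerivAt (τ : ℝ) (hτ : τ ∈ Set.Ici 0) := hasDerivAt_log_add_sub_log_add
    (add_pos_of_nonneg_of_pos hτ ha) (add_pos_of_nonneg_of_pos hτ hb)
  rw [integral_Ioi_of_hasDerivAt_of_tendsto' hasDerivAt
    (integrableOn_one_div_add_sub_one_div_add ha hb) (tendsto_log_add_sub_log_add a b)]
  simp

variable {ι : Type*} {s : Finset ι} {x : ι → ℝ} {P : ℝ[X]}

theorem eqOn_eval_div_prod_add_sub_coeff_div [DecidableEq ι] (hx : ∀ i ∈ s, 0 < x i)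
    (hinj : Set.InjOn x s) (hP : P.degree < #s) (b : ℝ) :
    Set.EqOn (fun τ ↦ P.eval τ / ∏ i ∈ s, (τ + x i) - P.coeff (#s - 1) * (1 / (τ + b)))
      (fun τ ↦ ∑ i ∈ s, P.eval (-x i) * nodalWeight s (-x) i * (1 / (τ + x i) - 1 / (τ + b)))
      (Set.Ioi 0) := by
  intro τ hτ
  have neg_injOn : Set.InjOn (-x) s := neg_injective.comp_injOn hinj
  have ne_node : ∀ i ∈ s, τ ≠ (-x) i := fun i hi ↦ ((neg_neg_of_pos (hx i hi)).trans hτ).ne'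
  simpa only [Pi.neg_apply, sub_neg_eq_add] using
    eval_div_prod_sub_sub_coeff_mul neg_injOn hP ne_node (1 / (τ + b))

theorem integrableOn_eval_div_prod_add_sub_coeff_div (hx : ∀ i ∈ s, 0 < x i)
    (hinj : Set.InjOn x s) (hP : P.degree < #s) (hb : 0 < b) :
    IntegrableOn (fun τ ↦ P.eval τ / ∏ i ∈ s, (τ + x i) - P.coeff (#s - 1) * (1 / (τ + b)))
      (Set.Ioi 0) := by
  classical
  rw [integrableOn_congr_fun (eqOn_eval_div_prod_add_sub_coeff_div hx hinj hP b) measurableSet_Ioi]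
  exact integrable_finsetSum _ fun i hi ↦
    (integrableOn_one_div_add_sub_one_div_add (hx i hi) hb).const_mul _

theorem integral_eval_div_prod_add_sub_coeff_div [DecidableEq ι] (hx : ∀ i ∈ s, 0 < x i)
    (hinj : Set.InjOn x s) (hP : P.degree < #s) (hb : 0 < b) :
    ∫ τ in Set.Ioi 0, (P.eval τ / ∏ i ∈ s, (τ + x i) - P.coeff (#s - 1) * (1 / (τ + b))) =
      ∑ i ∈ s, P.eval (-x i) * nodalWeight s (-x) i * (log b - log (x i)) := by
  rw [setIntegral_congr_fun measurableSet_Ioi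
    (eqOn_eval_div_prod_add_sub_coeff_div hx hinj hP b), integral_finsetSum _ fun i hi ↦
      (integrableOn_one_div_add_sub_one_div_add (hx i hi) hb).const_mul _]
  exact sum_congr rfl fun i hi ↦ by
    rw [integral_const_mul, integral_one_div_add_sub_one_div_add (hx i hi) hb]

theorem integrableOn_pow_div_prod_add (hx : ∀ i ∈ s, 0 < x i) (hinj : Set.InjOn x s) {m : ℕ}
    (hm : m + 1 < #s) : IntegrableOn (fun τ ↦ τ ^ m / ∏ i ∈ s, (τ + x i)) (Set.Ioi 0) := by
  have degree_lt : (X ^ m : ℝ[X]).degree < #s := by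
    rw [degree_X_pow]; exact_mod_cast (Nat.lt_succ_self m).trans hm
  have coeff_eq_zero : (X ^ m : ℝ[X]).coeff (#s - 1) = 0 := by
    rw [coeff_X_pow, if_neg (by lia)]
  simpa [coeff_eq_zero] using
    integrableOn_eval_div_prod_add_sub_coeff_div hx hinj degree_lt one_pos

theorem integrableOn_pow_card_sub_one_div_prod_add_sub (hs : s.Nonempty) (hx : ∀ i ∈ s, 0 < x i)
    (hinj : Set.InjOn x s) (hb : 0 < b) :
    IntegrableOn (fun τ ↦ τ ^ (#s - 1) / ∏ i ∈ s, (τ + x i) - 1 / (τ + b)) (Set.Ioi 0) := by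
  have degree_lt : (X ^ (#s - 1) : ℝ[X]).degree < #s := by
    rw [degree_X_pow]; exact_mod_cast Nat.sub_one_lt hs.card_ne_zero
  simpa using integrableOn_eval_div_prod_add_sub_coeff_div hx hinj degree_lt hb

end HalfAxis

section Subentropy

variable {ι : Type*} [DecidableEq ι] {s : Finset ι} {x : ι → ℝ}

/-- The subentropy `Q` of the pairwise distinct positive reals `x i`, `i ∈ s`. The number `d` of
variables is `#s`; repeated values give junk, through division by zero. -/
noncomputable def subentropy (s : Finset ι) (x : ι → ℝ) : ℝ :=
  -∑ i ∈ s, (x i ^ #s / ∏ j ∈ s.erase i, (x i - x j)) * log (x i)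

theorem subentropy_eq_integral (hx : ∀ i ∈ s, 0 < x i) (hinj : Set.InjOn x s) :
    subentropy s x = ∫ τ in Set.Ioi 0,
      (1 - τ ^ #s / ∏ i ∈ s, (τ + x i) - (s.val.map x).esymm 1 * (1 / (τ + 1))) := by
  let P : ℝ[X] := ∏ i ∈ s, (X + C (x i)) - X ^ #s
  have eval_P (τ : ℝ) : P.eval τ = ∏ i ∈ s, (τ + x i) - τ ^ #s := by simp [P, eval_prod]
  have eval_P_neg {i : ι} (hi : i ∈ s) : P.eval (-x i) = -(-x i) ^ #s := by
    rw [eval_P, prod_eq_zero hi (neg_add_cancel _), zero_sub]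
  have integral_P := integral_eval_div_prod_add_sub_coeff_div hx hinj
    (degree_prod_X_add_C_sub_X_pow_card_lt s x) one_pos
  rw [coeff_prod_X_add_C_sub_X_pow_card] at integral_P
  calc subentropy s x
      = ∑ i ∈ s, P.eval (-x i) * nodalWeight s (-x) i * (log 1 - log (x i)) := by
        rw [subentropy, ← sum_neg_distrib]
        refine sum_congr rfl fun i hi ↦ ?_
        rw [eval_P_neg hi, neg_mul, neg_pow_card_mul_nodalWeight_neg hi, log_one]
        ring
    _ = ∫ τ in Set.Ioi 0,
          (P.eval τ / ∏ i ∈ s, (τ + x i) - (s.val.map x).esymm 1 * (1 / (τ + 1))) :=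
        integral_P.symm
    _ = _ := setIntegral_congr_fun measurableSet_Ioi fun τ hτ ↦ by
        have prod_ne_zero : ∏ i ∈ s, (τ + x i) ≠ 0 :=
          prod_ne_zero_iff.mpr fun i hi ↦ (add_pos hτ (hx i hi)).ne'
        simp only [eval_P, sub_div, div_self prod_ne_zero]

end Subentropy

/-- **The identity `Q = e₁ + Σ_k e_k ∂H/∂e_k` via half-axis integrals.**
For `d ≥ 2` and pairwise distinct positive reals `x₁, …, x_d` with elementary
symmetric polynomials `e_k` and `q(τ) = ∏ (τ + xᵢ)`, the subentropy satisfies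
`Q = e₁ + e₁ (∫₀^∞ [τ^{d−1}/q − 1/(τ+1)] dτ − 1) + Σ_{k=2}^d e_k ∫₀^∞ τ^{d−k}/q dτ`. -/
theorem subentropy_euler_identity (d : ℕ) (hd : 2 ≤ d) (x : Fin d → ℝ)
    (hx : ∀ i, 0 < x i) (hdist : ∀ i j, i ≠ j → x i ≠ x j)
    (e : ℕ → ℝ)
    (he : ∀ k, e k = ∑ t ∈ Finset.powersetCard k (Finset.univ : Finset (Fin d)),
      ∏ i ∈ t, x i) :
    (-∑ i, (x i ^ d / ∏ j ∈ Finset.univ.erase i, (x i - x j)) * Real.log (x i)) =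
      e 1
      + e 1 * ((∫ τ in Set.Ioi (0 : ℝ),
          (τ ^ (d - 1) / (∏ i, (τ + x i)) - 1 / (τ + 1))) - 1)
      + ∑ k ∈ Finset.Icc 2 d,
          e k * ∫ τ in Set.Ioi (0 : ℝ), τ ^ (d - k) / (∏ i, (τ + x i)) := by
  have card_eq : #(univ : Finset (Fin d)) = d := card_fin d
  have univ_nonempty : (univ : Finset (Fin d)).Nonempty := card_pos.mp (by lia)
  have pos : ∀ i ∈ univ, 0 < x i := fun i _ ↦ hx i
  have injOn : Set.InjOn x (univ : Finset (Fin d)) := fun i _ j _ ↦ not_imp_not.mp (hdist i j)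
  obtain rfl : e = (univ.val.map x).esymm := funext fun k ↦ (he k).trans (esymm_map_val x _ k).symm
  have integrable_head := integrableOn_pow_card_sub_one_div_prod_add_sub univ_nonempty pos injOn
    one_pos
  have integrable_tail (k) (hk : k ∈ Icc 2 d) :
      IntegrableOn (fun τ ↦ τ ^ (d - k) / ∏ i, (τ + x i)) (Set.Ioi 0) := by
    rw [mem_Icc] at hk
    exact integrableOn_pow_div_prod_add pos injOn (by lia)
  have subentropy_eq := subentropy_eq_integral pos injOn
  have expand (τ : ℝ) (hτ : τ ∈ Set.Ioi 0) := one_sub_pow_card_div_prod_add_sub univ_nonempty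
    (prod_ne_zero_iff.mpr fun i hi ↦ (add_pos hτ (pos i hi)).ne') (1 / (τ + 1))
  simp only [card_eq, subentropy] at integrable_head subentropy_eq expand
  rw [subentropy_eq, setIntegral_congr_fun measurableSet_Ioi expand,
    integral_add (integrable_head.const_mul _)
      (integrable_finsetSum _ fun k hk ↦ (integrable_tail k hk).const_mul _),
    integral_finsetSum _ fun k hk ↦ (integrable_tail k hk).const_mul _]
  simp only [integral_const_mul]
  ring
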